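/- Let A be a (possibly non-standard) graded Artinian algebra over a field k whose associated graded algebra Gr_{m_A}(A) satisfies H(Gr_{m_A}(A))^∨ < H(A)^∨ strictly in the dominance order. Then A has no strong Lefschetz element; i.e., A is not strong Lefschetz. -/

import Mathlib

/-!
Write `h d = dim 𝒜 d` and `g d = dim mᵈ/mᵈ⁺¹`, let `ℓ` be strong Lefschetz and let `f` be
multiplication by `ℓ`. The rank of `fʲ` is squeezed between two bounds.

* `f` raises the `m`-adic filtration by one step, so `∑_{d ∈ S} g d ≤ dim ker fʲ` for every set `S`
  of `j` indices.
* `fʲ` maps `𝒜 d` to `𝒜 (d + j)` with maximal rank, so `∑_d min (h d) (h (d + j)) ≤ rank fʲ`.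
  Maximal rank also forces `h` to be unimodal, so every level set `{d | t < h d}` is an interval and
  loses at most `j` elements when it is intersected with its translate by `j`; summing over `t < i`
  gives `∑_d min (h d) i ≤ rank fʲ + i * j`.

For `S = {d | i < g d}` and `j = #S`, rank-nullity yields
`∑_d min (h d) i ≤ dim A - ∑_{d ∈ S} g d + i * j = ∑_d min (g d) i`. The outer terms are the sums of
the `i` largest parts of the conjugates of `h` and `g`. So the conjugate of `H(A)` is dominated by
that of `H(Gr_m(A))`, which excludes strict dominance in the other direction.
-/

/-- `P` is the Jordan type (multiset of Jordan block sizes) of the `k`-linear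
endomorphism `f`, characterized by the ranks of the powers of `f`. -/
def IsJordanTypeOf {k A : Type*} [Field k] [AddCommGroup A] [Module k A]
    (f : A →ₗ[k] A) (P : Multiset ℕ) : Prop :=
  (∀ p ∈ P, 0 < p) ∧
  ∀ j : ℕ, Module.finrank k (LinearMap.range (f ^ j)) = (P.map (fun p => p - j)).sum

/-- Dominance order on partitions (as multisets of parts): `DomLE P Q` means
`P ≤ Q` in the dominance order. -/
def DomLE (P Q : Multiset ℕ) : Prop :=
  P.sum = Q.sum ∧
  ∀ i : ℕ, ((P.sort (· ≥ ·)).take i).sum ≤ ((Q.sort (· ≥ ·)).take i).sum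

/-- The conjugate partition of a Hilbert function `H` (whose values are bounded
by `n`): its `i`-th part (for `1 ≤ i ≤ n`) is `#{d | H d ≥ i}`; zero parts are
discarded. -/
noncomputable def conjHilb (H : ℕ → ℕ) (n : ℕ) : Multiset ℕ :=
  ((Multiset.range n).map (fun i => Set.ncard {d : ℕ | i + 1 ≤ H d})).filter (fun c => 0 < c)

/-- The maximal graded ideal of a graded algebra, generated by the homogeneous
elements of positive degree. -/
def gradedMaxIdeal {k A : Type*} [Field k] [CommRing A] [Algebra k A]
    (𝒜 : ℕ → Submodule k A) : Ideal A :=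
  Ideal.span {x : A | ∃ i : ℕ, x ∈ 𝒜 (i + 1)}

/-- The Hilbert function of the associated graded algebra `Gr_m(A) = ⊕ mⁱ/mⁱ⁺¹`
of an Artinian local (or graded) algebra with respect to the ideal `m`:
`H i = dim_k mⁱ/mⁱ⁺¹ = dim_k mⁱ − dim_k mⁱ⁺¹`. -/
noncomputable def grHilb (k : Type*) {A : Type*} [Field k] [CommRing A] [Algebra k A]
    (m : Ideal A) : ℕ → ℕ :=
  fun i => Module.finrank k ((m ^ i).restrictScalars k)
    - Module.finrank k ((m ^ (i + 1)).restrictScalars k)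

/-- A linear form `ℓ` is strong Lefschetz for the graded algebra `A` with
grading `𝒜` if `ℓ ∈ 𝒜 1` and all multiplication maps `×ℓ^j : 𝒜 i → 𝒜 (i+j)`
have maximal rank. -/
def IsSL {k A : Type*} [Field k] [CommRing A] [Algebra k A]
    (𝒜 : ℕ → Submodule k A) (ℓ : A) : Prop :=
  ℓ ∈ 𝒜 1 ∧ ∀ i j : ℕ,
    Module.finrank k ((𝒜 i).map (LinearMap.mulLeft k (ℓ ^ j))) =
      min (Module.finrank k (𝒜 i)) (Module.finrank k (𝒜 (i + j)))

/-! ### Dominance order -/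

section Dominance

theorem eq_of_forall_sum_take_eq {M : Type*} [AddLeftCancelMonoid M] {l₁ l₂ : List M}
    (h₁ : 0 ∉ l₁) (h₂ : 0 ∉ l₂) (h : ∀ i, (l₁.take i).sum = (l₂.take i).sum) :
    l₁ = l₂ := by
  induction l₁ generalizing l₂ with
  | nil =>
    cases l₂ with
    | nil => rfl
    | cons b l₂ => exact absurd (by simpa using h 1) fun hb : 0 = b => h₂ (by simp [hb])
  | cons a l₁ ih =>
    cases l₂ with
    | nil => exact absurd (by simpa using h 1) fun ha : a = 0 => h₁ (by simp [ha])
    | cons b l₂ =>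
      obtain rfl : a = b := by simpa using h 1
      rw [ih (fun h₀ => h₁ (.tail _ h₀)) (fun h₀ => h₂ (.tail _ h₀))
        fun i => by simpa using h (i + 1)]

theorem DomLE.antisymm {P Q : Multiset ℕ} (hP : 0 ∉ P) (hQ : 0 ∉ Q) (hPQ : DomLE P Q)
    (hQP : DomLE Q P) : P = Q := by
  rw [← P.sort_eq (· ≥ ·), ← Q.sort_eq (· ≥ ·)]
  exact congrArg _ <| eq_of_forall_sum_take_eq (by simpa using hP) (by simpa using hQ)
    fun i => (hPQ.2 i).antisymm (hQP.2 i)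

theorem sum_take_filter_pos {l : List ℕ} (hl : l.Pairwise (· ≥ ·)) (i : ℕ) :
    ((l.filter (0 < ·)).take i).sum = (l.take i).sum := by
  induction l generalizing i with
  | nil => rfl
  | cons a l ih =>
    obtain ⟨hal, hl⟩ := List.pairwise_cons.1 hl
    rcases a.eq_zero_or_pos with rfl | ha
    · have hfilter : l.filter (0 < ·) = [] := by simpa using hal
      have htake : ∀ x ∈ (0 :: l).take i, x = 0 := fun x hx =>
        (List.mem_cons.1 (List.mem_of_mem_take hx)).elim id fun hx => Nat.le_zero.1 (hal x hx)
      simp [hfilter, List.sum_eq_zero htake]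
    · cases i <;> simp [ha, ih hl]

end Dominance

/-! ### Conjugate partitions -/

section Conjugate

open Finset

theorem sum_min_eq_sum_card_filter_lt {ι : Type*} (s : Finset ι) (H : ι → ℕ) (i : ℕ) :
    ∑ d ∈ s, min (H d) i = ∑ t ∈ range i, #{d ∈ s | t < H d} := by
  have hmin (d : ι) : min (H d) i = #{t ∈ range i | t < H d} := by
    rw [← card_range (min (H d) i)]
    congr 1
    ext t
    simp [and_comm]
  simp_rw [hmin]
  exact sum_card_bipartiteAbove_eq_sum_card_bipartiteBelow fun d t => t < H d

theorem sum_min_add_sum_filter_lt {ι : Type*} (s : Finset ι) (H : ι → ℕ) (i : ℕ) :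
    ∑ d ∈ s, min (H d) i + ∑ d ∈ s with i < H d, H d
      = ∑ d ∈ s, H d + i * #{d ∈ s | i < H d} := by
  rw [card_filter, mul_sum, sum_filter, ← sum_add_distrib, ← sum_add_distrib]
  refine sum_congr rfl fun d _ => ?_
  split_ifs <;> omega

variable {H : ℕ → ℕ} {s : Finset ℕ} {n : ℕ}

theorem ncard_setOf_succ_le (hs : ∀ d ∉ s, H d = 0) (t : ℕ) :
    {d : ℕ | t + 1 ≤ H d}.ncard = #{d ∈ s | t < H d} := by
  rw [← Set.ncard_coe_finset]
  congr 1
  ext d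
  have hd : t < H d → d ∈ s := fun h => by_contra fun hds => by simp [hs d hds] at h
  simpa [Nat.succ_le_iff] using hd

theorem zero_notMem_conjHilb (H : ℕ → ℕ) (n : ℕ) : 0 ∉ conjHilb H n := by
  simp [conjHilb]

theorem card_conjHilb_le (H : ℕ → ℕ) (n : ℕ) : (conjHilb H n).card ≤ n :=
  (Multiset.card_le_card (Multiset.filter_le _ _)).trans (by simp)

theorem sum_take_sort_conjHilb (hs : ∀ d ∉ s, H d = 0) (hn : ∀ d, H d ≤ n) (i : ℕ) :
    (((conjHilb H n).sort (· ≥ ·)).take i).sum = ∑ d ∈ s, min (H d) i := by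
  set c : ℕ → ℕ := fun t => #{d ∈ s | t < H d}
  have hc : Antitone c := fun t u htu =>
    card_le_card (monotone_filter_right s fun d _ hd => htu.trans_lt hd)
  have hpairwise : ((List.range n).map c).Pairwise (· ≥ ·) :=
    List.pairwise_map.2 (List.pairwise_lt_range.imp fun h => hc h.le)
  have hsort : (conjHilb H n).sort (· ≥ ·) = ((List.range n).map c).filter (0 < ·) := by
    simp_rw [conjHilb, ncard_setOf_succ_le hs]
    exact List.mergeSort_eq_self _ (hpairwise.filter _)
  have hzero : ∀ t ∈ range i, t ∉ range (min i n) → c t = 0 := fun t hti ht => by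
    simp only [mem_range] at hti ht
    exact card_eq_zero.2 (filter_eq_empty_iff.2 fun d _ => by have := hn d; omega)
  calc
    _ = (((List.range n).map c).take i).sum := by rw [hsort, sum_take_filter_pos hpairwise]
    _ = ∑ t ∈ range (min i n), c t := by rw [← List.map_take, List.take_range]; rfl
    _ = ∑ t ∈ range i, c t := sum_subset (range_subset_range.2 (min_le_left i n)) hzero
    _ = ∑ d ∈ s, min (H d) i := (sum_min_eq_sum_card_filter_lt s H i).symm

theorem sum_conjHilb (hs : ∀ d ∉ s, H d = 0) (hn : ∀ d, H d ≤ n) :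
    (conjHilb H n).sum = ∑ d ∈ s, H d := by
  have hlength : ((conjHilb H n).sort (· ≥ ·)).length ≤ n := by
    simpa using card_conjHilb_le H n
  calc
    (conjHilb H n).sum = (((conjHilb H n).sort (· ≥ ·)).take n).sum := by
      rw [List.take_of_length_le hlength, ← Multiset.sum_coe, Multiset.sort_eq]
    _ = ∑ d ∈ s, min (H d) n := sum_take_sort_conjHilb hs hn n
    _ = ∑ d ∈ s, H d := sum_congr rfl fun d _ => min_eq_left (hn d)

end Conjugate

/-! ### Unimodal sequences -/

section Unimodal

open Finset

/-- Unimodality of a function, in the valley-free form: no value is smaller than both a value to its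
left and a value to its right. -/
def IsUnimodal {α β : Type*} [Preorder α] [LinearOrder β] (h : α → β) : Prop :=
  ∀ ⦃a b c⦄, a ≤ b → b ≤ c → min (h a) (h c) ≤ h b

theorem card_le_card_filter_add_le_add {I : Finset ℕ} {b : ℕ} (hb : ∀ d ∈ I, d ≤ b) (j : ℕ) :
    #I ≤ #{d ∈ I | d + j ≤ b} + j := by
  have hsubset : {d ∈ I | ¬ d + j ≤ b} ⊆ Ico (b + 1 - j) (b + 1) := fun d hd => by
    obtain ⟨hdI, hdj⟩ := mem_filter.1 hd
    exact mem_Ico.2 ⟨by omega, Nat.lt_succ_of_le (hb d hdI)⟩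
  have hcard : #{d ∈ I | ¬ d + j ≤ b} ≤ j :=
    (card_le_card hsubset).trans (by rw [Nat.card_Ico]; omega)
  have hsplit := card_filter_add_card_filter_not (s := I) (fun d => d + j ≤ b)
  omega

theorem IsUnimodal.card_filter_lt_le {β : Type*} [LinearOrder β] {h : ℕ → β} (hh : IsUnimodal h)
    (s : Finset ℕ) (t : β) (j : ℕ) :
    #{d ∈ s | t < h d} ≤ #{d ∈ s | t < min (h d) (h (d + j))} + j := by
  set I := {d ∈ s | t < h d} with hI
  rcases I.eq_empty_or_nonempty with hempty | hne
  · simp [hempty]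
  have hmax : t < h (I.max' hne) := (mem_filter.1 (I.max'_mem hne)).2
  refine (card_le_card_filter_add_le_add (b := I.max' hne) (I.le_max') j).trans ?_
  gcongr
  intro d hd
  simp only [hI, mem_filter] at hd ⊢
  exact ⟨hd.1.1, lt_min hd.1.2 ((lt_min hd.1.2 hmax).trans_le (hh (d.le_add_right j) hd.2))⟩

theorem IsUnimodal.sum_min_le {h : ℕ → ℕ} (hh : IsUnimodal h) (s : Finset ℕ) (i j : ℕ) :
    ∑ d ∈ s, min (h d) i ≤ ∑ d ∈ s, min (h d) (h (d + j)) + i * j :=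
  calc
    _ = ∑ t ∈ range i, #{d ∈ s | t < h d} := sum_min_eq_sum_card_filter_lt s h i
    _ ≤ ∑ t ∈ range i, (#{d ∈ s | t < min (h d) (h (d + j))} + j) :=
      sum_le_sum fun t _ => hh.card_filter_lt_le s t j
    _ = ∑ d ∈ s, min (min (h d) (h (d + j))) i + i * j := by
      rw [sum_add_distrib, sum_min_eq_sum_card_filter_lt, sum_const, card_range, smul_eq_mul]
    _ ≤ ∑ d ∈ s, min (h d) (h (d + j)) + i * j := by
      exact Nat.add_le_add_right (sum_le_sum fun d _ => min_le_left _ i) _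

end Unimodal

/-! ### Dimension counts -/

section LinearAlgebra

open Finset Module

variable {k V W : Type*} [DivisionRing k] [AddCommGroup V] [Module k V] [AddCommGroup W]
  [Module k W]

theorem finrank_map_add_finrank_inf_ker (f : V →ₗ[k] W) (p : Submodule k V)
    [FiniteDimensional k p] :
    finrank k (p.map f) + finrank k ↥(p ⊓ f.ker) = finrank k p := by
  rw [← Submodule.map_comap_subtype, Submodule.finrank_map_subtype_eq,
    ← LinearMap.ker_domRestrict, ← LinearMap.range_domRestrict]
  exact (f.domRestrict p).finrank_range_add_finrank_ker

variable [FiniteDimensional k V]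

theorem sum_finrank_eq_finrank_sup {ι : Type*} {s : Finset ι} {G : ι → Submodule k V}
    (hG : s.SupIndep G) : ∑ d ∈ s, finrank k (G d) = finrank k ↥(s.sup G) := by
  classical
  induction s using Finset.induction_on with
  | empty => rw [sum_empty, sup_empty, finrank_bot]
  | insert a s ha ih =>
    have hdisj : Disjoint (G a) (s.sup G) := hG (subset_insert a s) (mem_insert_self a s) ha
    rw [sum_insert ha, ih (hG.subset (subset_insert a s)), sup_insert,
      ← Submodule.finrank_sup_add_finrank_inf_eq, hdisj.eq_bot, finrank_bot, add_zero]

theorem sum_finrank_eq_finrank_of_isInternal {ι : Type*} [DecidableEq ι] {G : ι → Submodule k V}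
    (hG : DirectSum.IsInternal G) {s : Finset ι} (hs : ∀ d ∉ s, G d = ⊥) :
    ∑ d ∈ s, finrank k (G d) = finrank k V := by
  have hsup : s.sup G = ⊤ := top_le_iff.1 <| hG.submodule_iSup_eq_top ▸ iSup_le fun d => by
    by_cases hd : d ∈ s
    · exact le_sup hd
    · exact (hs d hd).trans_le bot_le
  rw [sum_finrank_eq_finrank_sup (hG.submodule_iSupIndep.supIndep' s), hsup, finrank_top]

variable {f : V →ₗ[k] V} {F : ℕ → Submodule k V}

theorem finrank_sub_add_finrank_inf_ker_pow_le {d : ℕ} (hF : F (d + 1) ≤ F d)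
    (hf : (F d).map f ≤ F (d + 1)) (j : ℕ) :
    finrank k (F d) - finrank k (F (d + 1)) + finrank k ↥(F (d + 1) ⊓ (f ^ j).ker)
      ≤ finrank k ↥(F d ⊓ (f ^ (j + 1)).ker) := by
  have himage : finrank k ((F d).map (f ^ (j + 1))) ≤ finrank k ((F (d + 1)).map (f ^ j)) := by
    rw [pow_succ, Module.End.mul_eq_comp, Submodule.map_comp]
    exact Submodule.finrank_mono (Submodule.map_mono hf)
  have hnullity := finrank_map_add_finrank_inf_ker (f ^ (j + 1)) (F d)
  have hnullity' := finrank_map_add_finrank_inf_ker (f ^ j) (F (d + 1))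
  have hle := Submodule.finrank_mono hF
  omega

theorem sum_finrank_sub_le_finrank_inf_ker_pow (hF : Antitone F)
    (hf : ∀ d, (F d).map f ≤ F (d + 1)) (S : Finset ℕ) {a : ℕ} (ha : ∀ d ∈ S, a ≤ d) :
    ∑ d ∈ S, (finrank k (F d) - finrank k (F (d + 1))) ≤ finrank k ↥(F a ⊓ (f ^ #S).ker) := by
  induction S using Finset.induction_on_min generalizing a with
  | empty => simp
  | insert d S hd ih =>
    have hdS : d ∉ S := fun h => (hd d h).false
    rw [sum_insert hdS, card_insert_of_notMem hdS]
    calc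
      _ ≤ finrank k (F d) - finrank k (F (d + 1)) + finrank k ↥(F (d + 1) ⊓ (f ^ #S).ker) := by
        gcongr
        exact ih hd
      _ ≤ finrank k ↥(F d ⊓ (f ^ (#S + 1)).ker) :=
        finrank_sub_add_finrank_inf_ker_pow_le (hF d.le_succ) (hf d) #S
      _ ≤ finrank k ↥(F a ⊓ (f ^ (#S + 1)).ker) :=
        Submodule.finrank_mono (inf_le_inf_right _ (hF (ha d (mem_insert_self d S))))

end LinearAlgebra

/-! ### Powers of an ideal -/

section IdealPowers

open Finset Module

variable {k A : Type*} [Field k] [CommRing A] [Algebra k A] {m : Ideal A}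

variable (k m) in
theorem antitone_restrictScalars_pow : Antitone fun d => (m ^ d).restrictScalars k :=
  fun _ _ hab => Ideal.pow_le_pow_right hab

theorem grHilb_eq_zero_of_pow_eq_bot {N d : ℕ} (hN : m ^ N = ⊥) (hd : N ≤ d) :
    grHilb k m d = 0 := by
  have hbot : m ^ d = ⊥ := le_bot_iff.1 (hN ▸ Ideal.pow_le_pow_right hd)
  rw [grHilb, hbot, Submodule.restrictScalars_bot, finrank_bot, Nat.zero_sub]

variable [FiniteDimensional k A]

theorem sum_grHilb_add_finrank_pow (m : Ideal A) (N : ℕ) :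
    ∑ d ∈ range N, grHilb k m d + finrank k ((m ^ N).restrictScalars k) = finrank k A := by
  induction N with
  | zero =>
    rw [sum_range_zero, zero_add, pow_zero, Ideal.one_eq_top, Submodule.restrictScalars_top,
      finrank_top]
  | succ N ih =>
    have hle : finrank k ((m ^ (N + 1)).restrictScalars k)
        ≤ finrank k ((m ^ N).restrictScalars k) :=
      Submodule.finrank_mono (antitone_restrictScalars_pow k m N.le_succ)
    rw [sum_range_succ, ← ih, grHilb]
    omega

theorem sum_grHilb_of_pow_eq_bot {N : ℕ} (hN : m ^ N = ⊥) :
    ∑ d ∈ range N, grHilb k m d = finrank k A := by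
  rw [← sum_grHilb_add_finrank_pow (k := k) m N, hN, Submodule.restrictScalars_bot, finrank_bot,
    add_zero]

theorem grHilb_le_finrank (m : Ideal A) (d : ℕ) : grHilb k m d ≤ finrank k A :=
  (Nat.sub_le _ _).trans (Submodule.finrank_le _)

theorem sum_grHilb_le_finrank_ker {ℓ : A} (hℓ : ℓ ∈ m) (S : Finset ℕ) :
    ∑ d ∈ S, grHilb k m d ≤ finrank k (LinearMap.mulLeft k ℓ ^ #S).ker := by
  have hmap (d : ℕ) : ((m ^ d).restrictScalars k).map (LinearMap.mulLeft k ℓ)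
      ≤ (m ^ (d + 1)).restrictScalars k := by
    rintro _ ⟨x, hx, rfl⟩
    exact (pow_succ' m d).symm ▸ Ideal.mul_mem_mul hℓ hx
  exact (sum_finrank_sub_le_finrank_inf_ker_pow (antitone_restrictScalars_pow k m) hmap S
    fun d _ => d.zero_le).trans (Submodule.finrank_mono inf_le_right)

end IdealPowers

/-! ### Strong Lefschetz elements -/

section Graded

open Finset Module

variable {k A : Type*} [Field k] [CommRing A] [Algebra k A] {𝒜 : ℕ → Submodule k A}
  [GradedAlgebra 𝒜]

theorem map_mulLeft_pow_le {ℓ : A} (hℓ : ℓ ∈ 𝒜 1) (d j : ℕ) :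
    (𝒜 d).map (LinearMap.mulLeft k (ℓ ^ j)) ≤ 𝒜 (d + j) := by
  rintro _ ⟨x, hx, rfl⟩
  simpa [add_comm] using SetLike.mul_mem_graded (SetLike.pow_mem_graded j hℓ) hx

variable [FiniteDimensional k A]

variable (𝒜) in
theorem exists_finset_forall_notMem_eq_bot : ∃ s : Finset ℕ, ∀ d ∉ s, 𝒜 d = ⊥ := by
  have hfinite := WellFoundedGT.finite_ne_bot_of_iSupIndep
    (DirectSum.Decomposition.isInternal 𝒜).submodule_iSupIndep
  exact ⟨hfinite.toFinset, by simp⟩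

theorem isNilpotent_of_mem_graded_succ {i : ℕ} {x : A} (hx : x ∈ 𝒜 (i + 1)) : IsNilpotent x := by
  obtain ⟨s, hs⟩ := exists_finset_forall_notMem_eq_bot 𝒜
  obtain ⟨N, hN⟩ := s.bddAbove
  have hdeg : (N + 1) • (i + 1) ∉ s := fun h => by
    have := hN h
    simp only [smul_eq_mul] at this
    nlinarith
  exact ⟨N + 1, (Submodule.mem_bot k).1 (hs _ hdeg ▸ SetLike.pow_mem_graded (N + 1) hx)⟩

variable (𝒜) in
theorem isNilpotent_gradedMaxIdeal : IsNilpotent (gradedMaxIdeal 𝒜) := by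
  have : IsArtinianRing A := IsArtinianRing.of_finite k A
  have hle : gradedMaxIdeal 𝒜 ≤ nilradical A :=
    Ideal.span_le.2 fun _ ⟨_, hx⟩ => mem_nilradical.2 (isNilpotent_of_mem_graded_succ hx)
  obtain ⟨N, hN⟩ := IsArtinianRing.isNilpotent_nilradical (R := A)
  exact ⟨N, le_bot_iff.1 ((Ideal.pow_right_mono hle N).trans_eq hN)⟩

namespace IsSL

variable {ℓ : A} {m : Ideal A}

theorem isUnimodal_finrank (hℓ : IsSL 𝒜 ℓ) : IsUnimodal fun d => finrank k (𝒜 d) := by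
  intro a b c hab hbc
  obtain ⟨s, rfl⟩ := Nat.exists_eq_add_of_le hab
  obtain ⟨t, rfl⟩ := Nat.exists_eq_add_of_le hbc
  -- Multiplication by `ℓ ^ (s + t)` factors through the intermediate degree `a + s`.
  have hfactor : (𝒜 a).map (LinearMap.mulLeft k (ℓ ^ (s + t)))
      ≤ (𝒜 (a + s)).map (LinearMap.mulLeft k (ℓ ^ t)) := by
    rw [add_comm s, pow_add, LinearMap.mulLeft_mul, Submodule.map_comp]
    exact Submodule.map_mono (map_mulLeft_pow_le hℓ.1 a s)
  calc
    min (finrank k (𝒜 a)) (finrank k (𝒜 (a + s + t)))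
        = finrank k ((𝒜 a).map (LinearMap.mulLeft k (ℓ ^ (s + t)))) := by
      rw [add_assoc, hℓ.2]
    _ ≤ finrank k ((𝒜 (a + s)).map (LinearMap.mulLeft k (ℓ ^ t))) :=
      Submodule.finrank_mono hfactor
    _ ≤ finrank k (𝒜 (a + s)) := Submodule.finrank_map_le _ _

theorem sum_min_le_finrank_range (hℓ : IsSL 𝒜 ℓ) (s : Finset ℕ) (j : ℕ) :
    ∑ d ∈ s, min (finrank k (𝒜 d)) (finrank k (𝒜 (d + j)))
      ≤ finrank k (LinearMap.mulLeft k ℓ ^ j).range := by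
  have hindep : iSupIndep fun d => (𝒜 d).map (LinearMap.mulLeft k (ℓ ^ j)) :=
    ((DirectSum.Decomposition.isInternal 𝒜).submodule_iSupIndep.comp (add_left_injective j)).mono
      fun d => map_mulLeft_pow_le hℓ.1 d j
  simp_rw [← hℓ.2]
  rw [sum_finrank_eq_finrank_sup (hindep.supIndep' s), LinearMap.pow_mulLeft]
  exact Submodule.finrank_mono (Finset.sup_le fun d _ => LinearMap.map_le_range)

theorem sum_min_finrank_le_sum_min_grHilb (hℓ : IsSL 𝒜 ℓ) (hℓm : ℓ ∈ m) {N : ℕ}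
    (hN : m ^ N = ⊥) (s : Finset ℕ) (i : ℕ) :
    ∑ d ∈ s, min (finrank k (𝒜 d)) i ≤ ∑ d ∈ range N, min (grHilb k m d) i := by
  set S := {d ∈ range N | i < grHilb k m d}
  have hunimodal := hℓ.isUnimodal_finrank.sum_min_le s i #S
  have hrange := hℓ.sum_min_le_finrank_range s #S
  have hker : ∑ d ∈ S, grHilb k m d ≤ finrank k (LinearMap.mulLeft k ℓ ^ #S).ker :=
    sum_grHilb_le_finrank_ker hℓm S
  have hnullity := (LinearMap.mulLeft k ℓ ^ #S).finrank_range_add_finrank_ker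
  have hsplit : ∑ d ∈ range N, min (grHilb k m d) i + ∑ d ∈ S, grHilb k m d
      = ∑ d ∈ range N, grHilb k m d + i * #S := sum_min_add_sum_filter_lt _ _ i
  rw [sum_grHilb_of_pow_eq_bot hN] at hsplit
  omega

theorem domLE_conjHilb (hℓ : IsSL 𝒜 ℓ) (hℓm : ℓ ∈ m) (hm : IsNilpotent m) :
    DomLE (conjHilb (fun d => finrank k (𝒜 d)) (finrank k A))
      (conjHilb (grHilb k m) (finrank k A)) := by
  obtain ⟨s, hs⟩ := exists_finset_forall_notMem_eq_bot 𝒜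
  obtain ⟨N, hN⟩ := hm
  have hh : ∀ d ∉ s, finrank k (𝒜 d) = 0 := fun d hd => by rw [hs d hd, finrank_bot]
  have hh_le (d : ℕ) : finrank k (𝒜 d) ≤ finrank k A := Submodule.finrank_le _
  have hg : ∀ d ∉ range N, grHilb k m d = 0 := fun d hd =>
    grHilb_eq_zero_of_pow_eq_bot hN (by simpa using hd)
  constructor
  · rw [sum_conjHilb hh hh_le, sum_conjHilb hg (grHilb_le_finrank m), sum_grHilb_of_pow_eq_bot hN,
      sum_finrank_eq_finrank_of_isInternal (DirectSum.Decomposition.isInternal 𝒜) hs]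
  · intro i
    rw [sum_take_sort_conjHilb hh hh_le, sum_take_sort_conjHilb hg (grHilb_le_finrank m)]
    exact hℓ.sum_min_finrank_le_sum_min_grHilb hℓm hN s i

end IsSL

end Graded

theorem not_strongLefschetz_of_conj_assocGraded_lt_general
    {k A : Type*} [Field k] [CommRing A] [Algebra k A]
    (𝒜 : ℕ → Submodule k A) [GradedAlgebra 𝒜] [FiniteDimensional k A]
    {m : Ideal A} (hm : IsNilpotent m)
    (hlt : DomLE (conjHilb (grHilb k m) (Module.finrank k A))
        (conjHilb (fun i => Module.finrank k (𝒜 i)) (Module.finrank k A)))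
    (hne : conjHilb (grHilb k m) (Module.finrank k A) ≠
        conjHilb (fun i => Module.finrank k (𝒜 i)) (Module.finrank k A)) :
    ¬ ∃ ℓ ∈ m, IsSL 𝒜 ℓ := fun ⟨_, hℓm, hℓ⟩ =>
  hne <| hlt.antisymm (zero_notMem_conjHilb _ _) (zero_notMem_conjHilb _ _)
    (hℓ.domLE_conjHilb hℓm hm)

/-- Let `A` be a (possibly non-standard) graded Artinian algebra over a field
`k` whose associated graded algebra satisfies `H(Gr_{m_A}(A))^∨ < H(A)^∨`
strictly in the dominance order.  Then `A` has no strong Lefschetz element. -/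
theorem not_strongLefschetz_of_conj_assocGraded_lt
    {k A : Type*} [Field k] [CommRing A] [Algebra k A]
    (𝒜 : ℕ → Submodule k A) [GradedAlgebra 𝒜] [FiniteDimensional k A]
    (hconn : 𝒜 0 = Submodule.span k {(1 : A)})
    (hlt : DomLE (conjHilb (grHilb k (gradedMaxIdeal 𝒜)) (Module.finrank k A))
        (conjHilb (fun i => Module.finrank k (𝒜 i)) (Module.finrank k A)))
    (hne : conjHilb (grHilb k (gradedMaxIdeal 𝒜)) (Module.finrank k A) ≠
        conjHilb (fun i => Module.finrank k (𝒜 i)) (Module.finrank k A)) :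
    ¬ ∃ ℓ : A, IsSL 𝒜 ℓ := by
  rintro ⟨ℓ, hℓ⟩
  exact not_strongLefschetz_of_conj_assocGraded_lt_general 𝒜 (isNilpotent_gradedMaxIdeal 𝒜) hlt hne
    ⟨ℓ, Ideal.subset_span ⟨0, hℓ.1⟩, hℓ⟩
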